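/- Let V be a finite set, γ ∈ (0,1], and let F be a set function on subsets of V with F(∅) = 0 that is monotone non-decreasing and satisfies ∑_{j∈T} (F(S∪{j}) − F(S)) ≥ γ·(F(S∪T) − F(S)) for all disjoint S, T ⊆ V. Let S* ⊆ V with |S*| = k ≥ 1 and write L_max = F(S*) > 0. Let S_0 = ∅, S_{t+1} = S_t ∪ {j_t} with j_t maximizing F(S_t ∪ {j}) − F(S_t) over j ∈ V. Then for every ε with 0 < ε < L_max, the least t such that L_max − F(S_t) ≤ ε satisfies t ≤ ⌈(k/γ)·ln(L_max/ε)⌉; i.e., greedy selection run with stopping criterion F(S*) − F(S) ≤ ε returns a set of cardinality at most (k/γ)·ln(L_max/ε) + 1. -/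

import Mathlib

open scoped BigOperators

/-!
By weak submodularity, each greedy step closes at least the fraction `γ / |T|` of the gap between
`F T` and the current value: the marginal gains of the elements of `T` sum to at least `γ` times
the gap, and the greedy choice does at least as well as their average. As long as the gap is
positive it is therefore multiplied by at most `1 - γ / |T| ≤ exp (-γ / |T|)` in each step, so it
drops from its initial value `L` to `ε` within `(|T| / γ) * log (L / ε)` steps.
-/

theorem le_of_antitone_of_succ_le_one_sub_mul {u : ℕ → ℝ} {c ε : ℝ} (hu : Antitone u)
    (hstep : ∀ t, u (t + 1) ≤ (1 - c) * u t) (hε : 0 < ε) {n : ℕ}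
    (hn : Real.log (u 0 / ε) ≤ c * n) : u n ≤ ε := by
  -- If `u n > ε`, all earlier terms are positive, which makes `1 - c ≤ exp (-c)` applicable
  -- to them whatever the sign of `1 - c`.
  by_contra! hlt
  have hpos : ∀ t ≤ n, 0 < u t := fun t ht => (hε.trans hlt).trans_le (hu ht)
  have hexp : ∀ t < n, u (t + 1) ≤ Real.exp (-c) * u t := fun t ht =>
    (hstep t).trans (mul_le_mul_of_nonneg_right (Real.one_sub_le_exp_neg c) (hpos t ht.le).le)
  have hu0 : 0 < u 0 := hpos 0 n.zero_le
  refine hlt.not_ge ?_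
  calc
    u n ≤ Real.exp (-c) ^ n * u 0 := le_geom (Real.exp_nonneg _) n hexp
    _ = Real.exp (-(c * n)) * u 0 := by rw [← Real.exp_nat_mul, mul_neg, mul_comm c]
    _ ≤ Real.exp (-Real.log (u 0 / ε)) * u 0 := by gcongr
    _ = ε := by
      rw [Real.exp_neg, Real.exp_log (div_pos hu0 hε), inv_div, div_mul_cancel₀ _ hu0.ne']

section

variable {V : Type*} [DecidableEq V]

/-- `γ`-weak submodularity of a set function: the marginal gains of the elements of a set `T`
disjoint from `S` sum to at least `γ` times the gain of adding all of `T` to `S`. -/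
def IsWeaklySubmodular (γ : ℝ) (F : Finset V → ℝ) : Prop :=
  ∀ S T : Finset V, Disjoint S T → γ * (F (S ∪ T) - F S) ≤ ∑ j ∈ T, (F (S ∪ {j}) - F S)

/-- A run of the greedy algorithm for `F`: each set arises from the previous one by adding an
element of maximal marginal gain. The starting set is arbitrary, and the added element may already
be present, in which case the chain stalls. -/
def IsGreedyChain (F : Finset V → ℝ) (S : ℕ → Finset V) : Prop :=
  ∀ t, ∃ j, S (t + 1) = S t ∪ {j} ∧
    ∀ j', F (S t ∪ {j'}) - F (S t) ≤ F (S t ∪ {j}) - F (S t)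

variable {γ : ℝ} {F : Finset V → ℝ} {S : ℕ → Finset V}

theorem IsWeaklySubmodular.mul_sub_le_sum (hw : IsWeaklySubmodular γ F) (hF : Monotone F)
    (hγ : 0 ≤ γ) (A T : Finset V) :
    γ * (F T - F A) ≤ ∑ j ∈ T, (F (A ∪ {j}) - F A) :=
  calc
    γ * (F T - F A) ≤ γ * (F (A ∪ T \ A) - F A) := by
      rw [Finset.union_sdiff_self_eq_union]
      gcongr
      exact hF Finset.subset_union_right
    _ ≤ ∑ j ∈ T \ A, (F (A ∪ {j}) - F A) := hw A (T \ A) Finset.disjoint_sdiff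
    _ ≤ ∑ j ∈ T, (F (A ∪ {j}) - F A) :=
      Finset.sum_le_sum_of_subset_of_nonneg Finset.sdiff_subset fun _ _ _ =>
        sub_nonneg.2 (hF Finset.subset_union_left)

namespace IsGreedyChain

theorem monotone (hS : IsGreedyChain F S) : Monotone S :=
  monotone_nat_of_le_succ fun t => by
    obtain ⟨j, hj, -⟩ := hS t
    exact hj ▸ Finset.subset_union_left

theorem card_le_card_zero_add (hS : IsGreedyChain F S) (t : ℕ) :
    (S t).card ≤ (S 0).card + t := by
  induction t with
  | zero => rfl
  | succ t ih =>
    obtain ⟨j, hj, -⟩ := hS t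
    calc
      (S (t + 1)).card ≤ (S t).card + 1 := hj ▸ Finset.card_union_le (S t) {j}
      _ ≤ (S 0).card + (t + 1) := Nat.succ_le_succ ih

theorem sum_le_card_mul (hS : IsGreedyChain F S) (T : Finset V) (t : ℕ) :
    ∑ j ∈ T, (F (S t ∪ {j}) - F (S t)) ≤ T.card * (F (S (t + 1)) - F (S t)) := by
  obtain ⟨i, hi, hmax⟩ := hS t
  rw [hi, ← nsmul_eq_mul]
  exact Finset.sum_le_card_nsmul T _ _ fun j _ => hmax j

theorem sub_succ_le (hS : IsGreedyChain F S) (hw : IsWeaklySubmodular γ F) (hF : Monotone F)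
    (hγ : 0 ≤ γ) {T : Finset V} (hT : T.Nonempty) (t : ℕ) :
    F T - F (S (t + 1)) ≤ (1 - γ / T.card) * (F T - F (S t)) := by
  have hcard : (0 : ℝ) < T.card := Nat.cast_pos.2 hT.card_pos
  have hgain : γ / T.card * (F T - F (S t)) ≤ F (S (t + 1)) - F (S t) := by
    rw [div_mul_eq_mul_div, div_le_iff₀' hcard]
    exact (hw.mul_sub_le_sum hF hγ (S t) T).trans (hS.sum_le_card_mul T t)
  linarith

theorem sub_le_of_log_le (hS : IsGreedyChain F S) (hw : IsWeaklySubmodular γ F)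
    (hF : Monotone F) (hγ : 0 < γ) (T : Finset V) {ε : ℝ} (hε : 0 < ε) {n : ℕ}
    (hn : T.card / γ * Real.log ((F T - F (S 0)) / ε) ≤ n) : F T - F (S n) ≤ ε := by
  obtain rfl | hT := T.eq_empty_or_nonempty
  · exact (sub_nonpos.2 (hF (Finset.empty_subset _))).trans hε.le
  have hcard : (0 : ℝ) < T.card := Nat.cast_pos.2 hT.card_pos
  have hanti : Antitone fun t => F T - F (S t) := fun _ _ h =>
    sub_le_sub_left (hF (hS.monotone h)) _
  refine le_of_antitone_of_succ_le_one_sub_mul hanti (hS.sub_succ_le hw hF hγ.le hT) hε ?_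
  rwa [← inv_div, inv_mul_le_iff₀ (div_pos hγ hcard)] at hn

end IsGreedyChain

theorem greedy_cardinality_guarantee_general (hγ : 0 < γ) (hF : Monotone F)
    (hw : IsWeaklySubmodular γ F) (hS : IsGreedyChain F S) (T : Finset V) {ε : ℝ} (hε : 0 < ε)
    (hεT : ε < F T - F (S 0)) :
    ∃ t : ℕ, IsLeast {s : ℕ | F T - F (S s) ≤ ε} t ∧
      (t : ℤ) ≤ ⌈T.card / γ * Real.log ((F T - F (S 0)) / ε)⌉ ∧
      ((S t).card : ℝ) ≤
        (S 0).card + (T.card / γ * Real.log ((F T - F (S 0)) / ε) + 1) := by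
  set x := T.card / γ * Real.log ((F T - F (S 0)) / ε)
  have hx : 0 ≤ x :=
    mul_nonneg (by positivity) (Real.log_nonneg ((one_le_div hε).2 hεT.le))
  have hceil : F T - F (S ⌈x⌉₊) ≤ ε := hS.sub_le_of_log_le hw hF hγ T hε (Nat.le_ceil x)
  obtain ⟨t, ht⟩ : ∃ t, IsLeast {s : ℕ | F T - F (S s) ≤ ε} t := ⟨_, isLeast_csInf ⟨_, hceil⟩⟩
  have htx : t ≤ ⌈x⌉₊ := ht.2 hceil
  refine ⟨t, ht, ?_, ?_⟩
  · rw [← Int.natCast_ceil_eq_ceil hx]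
    exact_mod_cast htx
  · calc
      ((S t).card : ℝ) ≤ (S 0).card + ⌈x⌉₊ := by
        exact_mod_cast (hS.card_le_card_zero_add t).trans (Nat.add_le_add_left htx _)
      _ ≤ (S 0).card + (x + 1) := by
        gcongr
        exact (Nat.ceil_lt_add_one hx).le

end

/-- Cardinality guarantee for greedy maximization of a `γ`-weakly submodular
monotone set function with accuracy stopping criterion `F(S*) − F(S) ≤ ε`:
the least `t` achieving accuracy `ε` satisfies `t ≤ ⌈(k/γ)·ln(L_max/ε)⌉`,
and the returned set has cardinality at most `(k/γ)·ln(L_max/ε) + 1`. -/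
theorem greedy_cardinality_guarantee
    {V : Type*} [Fintype V] [DecidableEq V]
    (γ : ℝ) (hγ0 : 0 < γ) (hγ1 : γ ≤ 1)
    (F : Finset V → ℝ) (hF0 : F ∅ = 0)
    (hmono : ∀ S T : Finset V, S ⊆ T → F S ≤ F T)
    (hweak : ∀ S T : Finset V, Disjoint S T →
      ∑ j ∈ T, (F (S ∪ {j}) - F S) ≥ γ * (F (S ∪ T) - F S))
    (k : ℕ) (hk : 1 ≤ k) (Sstar : Finset V) (hSstar : Sstar.card = k)
    (Lmax : ℝ) (hLmax : Lmax = F Sstar) (hLpos : 0 < Lmax)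
    (Sseq : ℕ → Finset V) (hS0 : Sseq 0 = ∅)
    (hgreedy : ∀ t : ℕ, ∃ j : V, Sseq (t + 1) = Sseq t ∪ {j} ∧
      ∀ j' : V, F (Sseq t ∪ {j'}) - F (Sseq t) ≤ F (Sseq t ∪ {j}) - F (Sseq t))
    (ε : ℝ) (hε0 : 0 < ε) (hεL : ε < Lmax) :
    ∃ t : ℕ, IsLeast {s : ℕ | Lmax - F (Sseq s) ≤ ε} t ∧
      (t : ℤ) ≤ ⌈((k : ℝ) / γ) * Real.log (Lmax / ε)⌉ ∧
      ((Sseq t).card : ℝ) ≤ ((k : ℝ) / γ) * Real.log (Lmax / ε) + 1 := by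
  subst hSstar hLmax
  simpa [hS0, hF0] using greedy_cardinality_guarantee_general hγ0 (fun _ _ => hmono _ _) hweak
    hgreedy Sstar hε0 (by simpa [hS0, hF0] using hεL)
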